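/- (Proposition on curves, part (ii), torus case.) Let K be an algebraically closed field of characteristic p > 0, let f ∈ K[x, y] be an irreducible polynomial, and let X = {(a, b) ∈ (Kˣ)² : f(a, b) = 0}; assume X is infinite, so that X is an irreducible curve in the torus (Kˣ)². Let Γ be a finitely generated subgroup of (Kˣ)². If the stabilizer Stab(X) = {g ∈ (Kˣ)² : g·X = X} is finite, then X ∩ Γ is a finite union of groupless F-sets in Γ. -/

import Mathlib

/-- `S` is a groupless `F`-set in the subgroup `Γ` of `(Kˣ)²`: a subset of `Γ` of the
form `{α₀ · ∏_{i=1}^r F_q^{k·n_i}(α_i) : n_1, …, n_r ∈ ℕ}` for some `r ≥ 0`, `k ≥ 1`,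
a power `q = p^a` of `p`, and `α₀, …, α_r ∈ (Kˣ)²`, where `F_q : x ↦ x^q` is the
`q`-power Frobenius of the torus. -/
def IsGrouplessFSet₂ {K : Type*} [Field K] (p : ℕ)
    (Γ : Subgroup (Kˣ × Kˣ)) (S : Set (Kˣ × Kˣ)) : Prop :=
  S ⊆ ↑Γ ∧ ∃ (a : ℕ), 1 ≤ a ∧ ∃ (r k : ℕ), 1 ≤ k ∧
    ∃ (α₀ : Kˣ × Kˣ) (α : Fin r → Kˣ × Kˣ),
      S = {g | ∃ n : Fin r → ℕ, g = α₀ * ∏ i : Fin r, (α i) ^ ((p ^ a) ^ (k * n i))}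

/-!
Dividing the terms of `f` by one of them identifies `X ∩ Γ`, up to the finite kernel of a monomial
homomorphism `M`, with the solutions of `∑ yᵢ = 0` in `a • M(Γ)`, where `a` collects the ratios of
the coefficients of `f`. As `f` is irreducible, two plane curves with the same monomials meet in
finitely many points unless their equations are proportional, so only finitely many of these
solutions lie on any given other hyperplane `∑ bᵢ yᵢ = 0`.

Let everything be defined over a finitely generated field `L`. If `x * w ^ pⁿ` is a solution for
infinitely many `w` over `L`, applying a linear retraction `K → L ^ pⁿ` to the equation gives a
second hyperplane containing them; it has to be the same one, and this forces `x` to be a `pⁿ`-th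
power of a point over `L`. Since a finitely generated group has finitely many classes modulo
`pⁿ`-th powers, all but finitely many solutions are `pⁿ`-th powers. If the coset containing the
solutions has only finitely many successive `p`-th roots, they are finite in number. Otherwise it is
preserved by some power `q` of the Frobenius, and extracting `q`-th roots shows that the solutions
are the Frobenius orbits of finitely many points. Enlarging the coordinates to a finitely generated
`p`-saturated subgroup of `Lˣ` keeps these roots available. The orbits finally lift along `M`, whose
kernel stabilizes `X`, and the part of an orbit lying in `Γ` is indexed by an arithmetic
progression.
-/

section UnitsOfFinitelyGeneratedFields

open IntermediateField in
theorem exists_transcendental_over_finiteDimensional_adjoin {F L : Type*} [Field F] [Field L]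
    [Algebra F L] [Algebra.EssFiniteType F L] {x : L} (hx : Transcendental F x) :
    ∃ k : IntermediateField F L, Transcendental k x ∧ FiniteDimensional k⟮x⟯ L := by
  obtain ⟨t, hxt, ht⟩ := exists_isTranscendenceBasis_superset (R := F) (s := {x})
    (algebraicIndependent_unique_type_iff.2 (by simpa using hx))
  have hxt : x ∈ t := hxt rfl
  have hinsert : insert x (t \ {x}) = t := by
    rw [Set.insert_sdiff_singleton, Set.insert_eq_of_mem hxt]
  refine ⟨adjoin F (t \ {x}), ?_, ?_⟩
  · rw [transcendental_adjoin_iff]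
    have hindep : AlgebraicIndepOn F id (insert x (t \ {x})) := hinsert.symm ▸ ht.1
    rw [← Set.image_id (t \ {x})]
    exact ((AlgebraicIndepOn.insert_iff (by simp)).1 hindep).2
  · set k := adjoin F (t \ {x})
    have : Algebra.EssFiniteType k L := .of_comp F k L
    have : Algebra.EssFiniteType k⟮x⟯ L := .of_comp k k⟮x⟯ L
    have hle : Algebra.adjoin F t ≤ (k⟮x⟯.restrictScalars F).toSubalgebra := by
      rw [← hinsert, Algebra.adjoin_le_iff, Set.insert_subset_iff]
      exact ⟨mem_adjoin_simple_self k x, fun y hy ↦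
        k⟮x⟯.algebraMap_mem (⟨y, subset_adjoin F _ hy⟩ : k)⟩
    let _ : Algebra (Algebra.adjoin F t) k⟮x⟯ := (Subalgebra.inclusion hle).toRingHom.toAlgebra
    have : IsScalarTower (Algebra.adjoin F t) k⟮x⟯ L := .of_algebraMap_eq fun _ ↦ rfl
    have : Algebra.IsAlgebraic (Algebra.adjoin F t) L :=
      Subtype.range_coe (s := t) ▸ ht.isAlgebraic
    have : Algebra.IsAlgebraic k⟮x⟯ L := .extendScalars (Subalgebra.inclusion_injective hle)
    exact Algebra.finite_of_essFiniteType_of_isAlgebraic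

theorem exists_monoidHom_ne_one_of_finiteDimensional {E L : Type*} [Field E] [Field L]
    [Algebra E L] [FiniteDimensional E L] {y : Eˣ} {v : Eˣ →* Multiplicative ℤ} (hv : v y ≠ 1) :
    ∃ w : Lˣ →* Multiplicative ℤ, w (Units.map (algebraMap E L : E →* L) y) ≠ 1 := by
  have hnorm : Units.map (Algebra.norm E) (Units.map (algebraMap E L : E →* L) y) =
      y ^ Module.finrank E L := Units.ext (by simp [Algebra.norm_algebraMap])
  refine ⟨v.comp (Units.map (Algebra.norm E)), ?_⟩
  rw [MonoidHom.comp_apply, hnorm, map_pow]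
  exact fun h ↦ hv ((pow_eq_one_iff_left Module.finrank_pos.ne').1 h)

open IntermediateField in
theorem exists_monoidHom_ne_one_of_transcendental {F L : Type*} [Field F] [Field L] [Algebra F L]
    [Algebra.EssFiniteType F L] {x : Lˣ} (hx : Transcendental F (x : L)) :
    ∃ v : Lˣ →* Multiplicative ℤ, v x ≠ 1 := by
  classical
  obtain ⟨k, hxk, hfin⟩ := exists_transcendental_over_finiteDimensional_adjoin hx
  let e : k⟮(x : L)⟯ →* RatFunc k := (RatFunc.algEquivOfTranscendental (x : L) hxk).symm
  have hgen : e (AdjoinSimple.gen k (x : L)) = RatFunc.X :=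
    RatFunc.algEquivOfTranscendental_symm_gen _ hxk
  let y : k⟮(x : L)⟯ˣ := Units.mk0 (AdjoinSimple.gen k (x : L))
    fun h ↦ x.ne_zero (congrArg Subtype.val h)
  let deg : (RatFunc k)ˣ →* Multiplicative ℤ :=
    WithZero.unitsWithZeroEquiv.toMonoidHom.comp (Units.map (RatFunc.inftyValuation k : _ →* _))
  have hdeg : deg.comp (Units.map e) y = Multiplicative.ofAdd 1 := by
    rw [← WithZero.coe_inj]
    change WithZero.coe (WithZero.unzero _) = _
    rw [WithZero.coe_unzero]
    exact (congrArg (RatFunc.inftyValuation k) hgen).trans (RatFunc.inftyValuation.X k)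
  obtain ⟨w, hw⟩ :=
    exists_monoidHom_ne_one_of_finiteDimensional (L := L) (hdeg.trans_ne (by decide))
  exact ⟨w, fun h ↦ hw (h ▸ congrArg w (Units.ext rfl))⟩

theorem module_finite_of_forall_dual_eq_zero_mem {R M : Type*} [CommRing R] [IsDomain R]
    [IsNoetherianRing R] [AddCommGroup M] [Module R M] {N : Submodule R M} (hN : N.FG)
    (hdual : ∀ x, (∀ φ : Module.Dual R M, φ x = 0) → x ∈ N)
    (htors : ∀ x, ∃ r : R, r ≠ 0 ∧ r • x ∈ N) : Module.Finite R M := by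
  have : Module.Finite R N := .of_fg hN
  have hrestrict : Function.Injective N.dualRestrict := by
    refine (injective_iff_map_eq_zero _).2 fun φ hφ ↦ LinearMap.ext fun x ↦ ?_
    obtain ⟨r, hr, hrx⟩ := htors x
    have : r • φ x = 0 := by simpa using LinearMap.congr_fun hφ ⟨r • x, hrx⟩
    exact (smul_eq_zero_iff_right hr).1 this
  have : IsNoetherian R (Module.Dual R M) := isNoetherian_of_injective _ hrestrict
  have hker : LinearMap.ker (Module.Dual.eval R M) ≤ N := fun x hx ↦
    hdual x fun φ ↦ LinearMap.congr_fun hx φ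
  exact ⟨Submodule.fg_of_fg_map_of_fg_inf_ker (Module.Dual.eval R M) (IsNoetherian.noetherian _)
    ((Submodule.FG.of_le hN (inf_le_right.trans hker)))⟩

theorem group_fg_of_forall_monoidHom_eq_one_mem {G : Type*} [CommGroup G] {A : Subgroup G}
    (hA : A.FG) (hhom : ∀ x, (∀ v : G →* Multiplicative ℤ, v x = 1) → x ∈ A)
    (htors : ∀ x, ∃ n : ℕ, n ≠ 0 ∧ x ^ n ∈ A) : Group.FG G := by
  refine GroupFG.iff_add_fg.2 (Module.Finite.iff_addGroup_fg.1 ?_)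
  refine module_finite_of_forall_dual_eq_zero_mem (R := ℤ)
    (N := AddSubgroup.toIntSubmodule (Subgroup.toAddSubgroup A)) ?_ ?_ ?_
  · exact (Submodule.fg_iff_addSubgroup_fg _).2 ((Subgroup.fg_iff_add_fg A).1 hA)
  · exact fun x hx ↦ hhom x.toMul fun v ↦ hx (MonoidHom.toAdditiveLeft v).toIntLinearMap
  · intro x
    obtain ⟨n, hn, hx⟩ := htors x.toMul
    refine ⟨n, Nat.cast_ne_zero.2 hn, ?_⟩
    rw [natCast_zsmul]
    exact hx

open IntermediateField in
theorem isOfFinOrder_of_isAlgebraic {F L : Type*} [Field F] [Finite F] [Field L] [Algebra F L]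
    {x : Lˣ} (hx : IsAlgebraic F (x : L)) : IsOfFinOrder x := by
  have : FiniteDimensional F F⟮(x : L)⟯ := adjoin.finiteDimensional hx.isIntegral
  have : Finite F⟮(x : L)⟯ := Module.finite_of_finite F
  let y : F⟮(x : L)⟯ˣ := Units.mk0 (AdjoinSimple.gen F (x : L))
    fun h ↦ x.ne_zero (congrArg Subtype.val h)
  have hy : Units.map (F⟮(x : L)⟯.val : _ →* L) y = x := Units.ext rfl
  exact hy ▸ MonoidHom.isOfFinOrder _ (isOfFinOrder_of_finite y)

theorem orderOf_coprime_of_charP {R : Type*} [CommRing R] [IsReduced R] {p : ℕ} [Fact p.Prime]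
    [CharP R p] {x : Rˣ} (hx : IsOfFinOrder x) : (orderOf x).Coprime p := by
  refine Nat.Coprime.symm ((Nat.Prime.coprime_iff_not_dvd Fact.out).2 ?_)
  rintro ⟨d, hd⟩
  have hxd : x ^ d = 1 := by
    have hpow : (x : R) ^ (p ^ 1 * d) = 1 := by
      rw [pow_one, ← hd, ← Units.val_pow_eq_pow_val, pow_orderOf_eq_one, Units.val_one]
    exact Units.ext (by simpa using (ExpChar.pow_prime_pow_mul_eq_one_iff p 1 d (x : R)).1 hpow)
  have hd0 : 0 < d := Nat.pos_of_mul_pos_left (hd ▸ hx.orderOf_pos)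
  have hle : p * d ≤ d := hd ▸ orderOf_le_of_pow_eq_one hd0 hxd
  exact (lt_mul_of_one_lt_left hd0 (Nat.Prime.one_lt Fact.out)).not_ge hle

/-- The subgroup of elements some `p`-power power of which lies in `A`. -/
def pSaturation {G : Type*} [CommGroup G] (p : ℕ) (A : Subgroup G) : Subgroup G where
  carrier := {u | ∃ n : ℕ, u ^ p ^ n ∈ A}
  one_mem' := ⟨0, by simp⟩
  mul_mem' := by
    rintro u v ⟨n, hn⟩ ⟨m, hm⟩
    refine ⟨n + m, ?_⟩
    rw [mul_pow]
    refine mul_mem ?_ ?_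
    · rw [pow_add, pow_mul]
      exact pow_mem hn _
    · rw [add_comm, pow_add, pow_mul]
      exact pow_mem hm _
  inv_mem' := by
    rintro u ⟨n, hn⟩
    exact ⟨n, inv_pow u _ ▸ inv_mem hn⟩

theorem le_pSaturation {G : Type*} [CommGroup G] (p : ℕ) (A : Subgroup G) : A ≤ pSaturation p A :=
  fun u hu ↦ ⟨0, by simpa using hu⟩

theorem mem_pSaturation_of_pow_mem {G : Type*} [CommGroup G] {p : ℕ} {A : Subgroup G} {u : G}
    (hu : u ^ p ∈ pSaturation p A) : u ∈ pSaturation p A := by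
  obtain ⟨n, hn⟩ := hu
  exact ⟨n + 1, by rwa [pow_succ', pow_mul]⟩

theorem fg_pSaturation_units {L : Type*} [Field L] {p : ℕ} [Fact p.Prime] [Algebra (ZMod p) L]
    [Algebra.EssFiniteType (ZMod p) L] {A : Subgroup Lˣ} (hA : A.FG) : (pSaturation p A).FG := by
  have : CharP L p := charP_of_injective_algebraMap (algebraMap (ZMod p) L).injective p
  have hAfg : (A.subgroupOf (pSaturation p A)).FG := by
    rw [← Group.fg_iff_subgroup_fg] at hA ⊢
    let e := Subgroup.subgroupOfEquivOfLe (le_pSaturation p A)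
    exact Group.fg_of_surjective (f := e.symm.toMonoidHom) e.symm.surjective
  refine (Group.fg_iff_subgroup_fg _).1 (group_fg_of_forall_monoidHom_eq_one_mem hAfg ?_ ?_)
  · rintro ⟨u, n, hn⟩ hu
    have hfin : IsOfFinOrder u := by
      by_contra hu'
      obtain ⟨v, hv⟩ := exists_monoidHom_ne_one_of_transcendental (F := ZMod p)
        (mt isOfFinOrder_of_isAlgebraic hu')
      exact hv (hu (v.comp (Subgroup.subtype _)))
    have hcop : (orderOf u).Coprime (p ^ n) := (orderOf_coprime_of_charP hfin).pow_right n
    have hmem : u ∈ Subgroup.zpowers (u ^ p ^ n) := mem_zpowers_pow_iff.2 hcop.symm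
    exact (Subgroup.zpowers_le.2 hn) hmem
  · rintro ⟨u, n, hn⟩
    exact ⟨p ^ n, pow_ne_zero _ (NeZero.ne p), hn⟩

theorem subgroup_fg_map {G G' : Type*} [Group G] [Group G'] {H : Subgroup G} (hH : H.FG)
    (φ : G →* G') : (H.map φ).FG :=
  (Subgroup.fg_iff_submonoid_fg _).2 (((Subgroup.fg_iff_submonoid_fg _).1 hH).map φ)

section IsPSaturatedIn

variable {K : Type*} [Field K] {p : ℕ} {L : Subfield K} {B : Subgroup Kˣ}

/-- `B` is a subgroup of `Lˣ`, for a subfield `L` of `K`, that contains the `p`-th roots in `L` of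
its elements. Both groups are viewed inside `Kˣ`, as `L` will be varied while `K` is fixed. -/
structure IsPSaturatedIn (p : ℕ) (L : Subfield K) (B : Subgroup Kˣ) : Prop where
  mem_subfield : ∀ u ∈ B, (u : K) ∈ L
  mem_of_pow_mem : ∀ u : Kˣ, (u : K) ∈ L → u ^ p ∈ B → u ∈ B

theorem IsPSaturatedIn.mem_of_pow_pow_mem (hB : IsPSaturatedIn p L B) {u : Kˣ} (hu : (u : K) ∈ L)
    (n : ℕ) (hun : u ^ p ^ n ∈ B) : u ∈ B := by
  induction n with
  | zero => simpa using hun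
  | succ n ih =>
    rw [pow_succ, pow_mul] at hun
    exact ih (hB.mem_of_pow_mem _ (by simpa using pow_mem hu _) hun)

theorem exists_isPSaturatedIn [Fact p.Prime] [CharP K p] {A : Subgroup Kˣ} (hA : A.FG) :
    ∃ (L : Subfield K) (B : Subgroup Kˣ), B.FG ∧ A ≤ B ∧ IsPSaturatedIn p L B := by
  classical
  obtain ⟨s, rfl⟩ := id hA
  let _ : Algebra (ZMod p) K := ZMod.algebra K p
  let L : IntermediateField (ZMod p) K := .adjoin (ZMod p) (s.image Units.val)
  have : Algebra.EssFiniteType (ZMod p) L := IntermediateField.essFiniteType_iff.2 ⟨_, rfl⟩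
  let j : Lˣ →* Kˣ := Units.map (L.val : L →* K)
  have hj : Function.Injective j := Units.map_injective Subtype.val_injective
  have exists_lift : ∀ u : Kˣ, (u : K) ∈ L → ∃ w : Lˣ, j w = u := fun u hu ↦
    ⟨Units.mk0 ⟨u, hu⟩ fun h ↦ u.ne_zero (congrArg Subtype.val h), Units.ext rfl⟩
  choose! lift j_lift using exists_lift
  have hsL : ∀ u ∈ s, (u : K) ∈ L := fun u hu ↦
    IntermediateField.subset_adjoin _ _ (Finset.mem_image_of_mem _ hu)
  let A' : Subgroup Lˣ := .closure (s.image lift)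
  refine ⟨L.toSubfield, (pSaturation p A').map j, ?_, ?_, ?_, ?_⟩
  · exact subgroup_fg_map (fg_pSaturation_units ⟨_, rfl⟩) j
  · refine (Subgroup.closure_le _).2 fun u hu ↦ ⟨lift u, ?_, j_lift u (hsL u hu)⟩
    exact le_pSaturation p A' (Subgroup.subset_closure (Finset.mem_image_of_mem _ hu))
  · rintro _ ⟨w, -, rfl⟩
    exact w.1.2
  · rintro u hu ⟨w, hw, hwu⟩
    obtain ⟨v, rfl⟩ : ∃ v, j v = u := ⟨_, j_lift u hu⟩
    rw [← map_pow, hj.eq_iff] at hwu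
    exact ⟨v, mem_pSaturation_of_pow_mem (hwu ▸ hw), rfl⟩

theorem exists_isPSaturatedIn_coordinates [Fact p.Prime] [CharP K p] {I : Type*} [Finite I]
    {D : Subgroup (I → Kˣ)} (hD : D.FG) :
    ∃ (L : Subfield K) (B : Subgroup Kˣ), B.FG ∧ IsPSaturatedIn p L B ∧ ∀ d ∈ D, ∀ i, d i ∈ B := by
  obtain ⟨L, B, hBfg, hAB, hB⟩ := exists_isPSaturatedIn (p := p)
    (Subgroup.FG.iSup (fun i ↦ D.map (Pi.evalMonoidHom (fun _ : I ↦ Kˣ) i))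
      fun i ↦ subgroup_fg_map hD _)
  exact ⟨L, B, hBfg, hB, fun d hd i ↦ hAB (Subgroup.mem_iSup_of_mem i ⟨d, hd, rfl⟩)⟩

end IsPSaturatedIn

end UnitsOfFinitelyGeneratedFields

section PowerMapsOfFinitelyGeneratedGroups

variable {G : Type*} [CommGroup G]

theorem subgroup_fg_of_le {H H' : Subgroup G} (hH' : H'.FG) (hle : H ≤ H') : H.FG := by
  rw [Subgroup.fg_iff_add_fg, ← AddSubgroup.toIntSubmodule_toAddSubgroup H.toAddSubgroup,
    ← Submodule.fg_iff_addSubgroup_fg]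
  refine Submodule.FG.of_le (T := AddSubgroup.toIntSubmodule H'.toAddSubgroup) ?_ hle
  exact (Submodule.fg_iff_addSubgroup_fg _).2 ((Subgroup.fg_iff_add_fg H').1 hH')

theorem exists_coprime_pow_eq_one [Group.FG G] {q : ℕ} {x : G} (hx : ∀ n, ∃ y : G, y ^ q ^ n = x) :
    ∃ m : ℕ, m.Coprime q ∧ x ^ m = 1 := by
  have : Module.Finite ℤ (Additive G) := Module.Finite.iff_addGroup_fg.2 inferInstance
  obtain ⟨⟨r, hr⟩, hrx⟩ := (Ideal.mem_iInf_smul_pow_eq_bot_iff (Ideal.span {(q : ℤ)})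
    (Additive.ofMul x)).1 <| (Submodule.mem_iInf _).2 fun n ↦ by
      obtain ⟨y, rfl⟩ := hx n
      have : Additive.ofMul (y ^ q ^ n) = (q : ℤ) ^ n • Additive.ofMul y := by
        rw [ofMul_pow, ← natCast_zsmul, Nat.cast_pow]
      rw [this]
      exact Submodule.smul_mem_smul
        (Ideal.pow_mem_pow (Ideal.mem_span_singleton_self _) n) Submodule.mem_top
  obtain ⟨c, rfl⟩ := Ideal.mem_span_singleton.1 hr
  refine ⟨(1 - q * c).natAbs, ?_, ?_⟩
  · have : IsCoprime (1 - q * c) (q : ℤ) := ⟨1, c, by ring⟩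
    exact Int.isCoprime_iff_gcd_eq_one.1 this
  · have hrx : x ^ (q * c) = x := hrx
    rw [pow_natAbs_eq_one, zpow_sub, hrx, zpow_one, mul_inv_cancel]

theorem exists_pow_pow_sub_one_eq_one [Group.FG G] {q : ℕ} (hq : 1 < q) {x : G}
    (hx : ∀ n, ∃ y : G, y ^ q ^ n = x) : ∃ k, 1 ≤ k ∧ x ^ (q ^ k - 1) = 1 := by
  obtain ⟨m, hm, hxm⟩ := exists_coprime_pow_eq_one hx
  have hm0 : 0 < m := Nat.pos_of_ne_zero fun h ↦ hq.ne' (by simpa [h] using hm)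
  have hdvd : m ∣ q ^ m.totient - 1 :=
    (Nat.modEq_iff_dvd' (Nat.one_le_pow _ _ (by lia))).1 (Nat.ModEq.pow_totient hm.symm).symm
  exact ⟨_, Nat.totient_pos.2 hm0,
    orderOf_dvd_iff_pow_eq_one.1 ((orderOf_dvd_of_pow_eq_one hxm).trans hdvd)⟩

theorem finite_setOf_isOfFinOrder [Group.FG G] : {x : G | IsOfFinOrder x}.Finite := by
  have : Group.FG (CommGroup.torsion G) := (Group.fg_iff_subgroup_fg _).2
    (subgroup_fg_of_le (Group.fg_def.1 inferInstance) le_top)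
  have : Finite (CommGroup.torsion G) := CommGroup.finite_of_fg_isMulTorsion _
    fun x ↦ Submonoid.isOfFinOrder_coe.1 x.2
  exact Set.toFinite (CommGroup.torsion G : Set G)

theorem pow_pow_mem_iff {q : ℕ} {Y : Set G} (hY : ∀ y, y ^ q ∈ Y ↔ y ∈ Y) (n : ℕ) (y : G) :
    y ^ q ^ n ∈ Y ↔ y ∈ Y := by
  induction n with
  | zero => simp
  | succ n ih => rw [pow_succ, pow_mul, hY, ih]

theorem exists_finite_eq_orbits [Group.FG G] {q : ℕ} (hq : 1 < q) {Y : Set G}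
    (hY : ∀ y, y ^ q ∈ Y ↔ y ∈ Y) (hfin : {y ∈ Y | ¬∃ b, b ^ q = y}.Finite) :
    ∃ E : Set G, E.Finite ∧ Y = {y | ∃ e ∈ E, ∃ n, y = e ^ q ^ n} := by
  refine ⟨{y ∈ Y | ¬∃ b, b ^ q = y} ∪ {y ∈ Y | IsOfFinOrder y},
    hfin.union (finite_setOf_isOfFinOrder.subset fun y hy ↦ hy.2), Set.Subset.antisymm ?_ ?_⟩
  · intro y hy
    by_cases hdiv : ∀ n, ∃ b, b ^ q ^ n = y
    · obtain ⟨k, hk, hyk⟩ := exists_pow_pow_sub_one_eq_one hq hdiv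
      have hpos : 0 < q ^ k - 1 := Nat.sub_pos_of_lt (Nat.one_lt_pow (by lia) hq)
      exact ⟨y, .inr ⟨hy, isOfFinOrder_iff_pow_eq_one.2 ⟨_, hpos, hyk⟩⟩, 0, by simp⟩
    · obtain ⟨n, ⟨b, rfl⟩, hn⟩ : ∃ n, (∃ b, b ^ q ^ n = y) ∧ ¬∃ b, b ^ q ^ (n + 1) = y := by
        by_contra! h
        exact hdiv fun n ↦ n.rec ⟨y, by simp⟩ h
      refine ⟨b, .inl ⟨(pow_pow_mem_iff hY n b).1 hy, ?_⟩, n, rfl⟩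
      rintro ⟨c, rfl⟩
      exact hn ⟨c, by rw [pow_succ', pow_mul]⟩
  · rintro _ ⟨e, he, n, rfl⟩
    exact (pow_pow_mem_iff hY n e).2 (he.elim And.left And.left)

open scoped Pointwise

theorem finite_of_finite_pow_cosets {A : Subgroup G} (hA : A.FG) {a : G} {n : ℕ} (hn : n ≠ 0)
    {Y : Set G} (hYA : Y ⊆ a • (A : Set G))
    (hY : ∀ x ∈ a • (A : Set G), {w ∈ (A : Set G) | x * w ^ n ∈ Y}.Finite) : Y.Finite := by
  have : Group.FG A := (Group.fg_iff_subgroup_fg A).2 hA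
  have : (powMonoidHom (α := A) n).range.FiniteIndex :=
    Subgroup.finiteIndex_range_powMonoidHom_of_fg A hn
  let Z : Set A := {γ | a * γ ∈ Y}
  have hZ : Z.Finite := by
    refine Set.Finite.of_finite_fibers (QuotientGroup.mk (s := (powMonoidHom (α := A) n).range))
      (Set.toFinite _) fun _ ⟨γ₀, _, hγ₀⟩ ↦ ?_
    refine ((hY (a * γ₀) ⟨γ₀, γ₀.2, rfl⟩).preimage Subtype.val_injective.injOn |>.image
      fun w ↦ γ₀ * w ^ n).subset ?_
    rintro γ ⟨hγ, hγγ₀⟩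
    obtain ⟨w, hw⟩ := QuotientGroup.eq.1 (hγ₀.trans hγγ₀.symm)
    obtain rfl : γ₀ * w ^ n = γ := mul_eq_of_eq_inv_mul hw
    refine ⟨w, ⟨w.2, ?_⟩, rfl⟩
    rw [mul_assoc]
    exact hγ
  refine (hZ.image fun γ : A ↦ a * (γ : G)).subset fun y hy ↦ ?_
  obtain ⟨γ, hγ, rfl⟩ := hYA hy
  exact ⟨⟨γ, hγ⟩, hy, rfl⟩

variable {p : ℕ} {a : G} {S : Set G} {Γ : Subgroup G}

theorem finite_setOf_not_pow (hΓ : Γ.FG) (hp : p ≠ 0)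
    (hdescent : ∀ n, ∀ x ∈ a • (Γ : Set G),
      {w ∈ (Γ : Set G) | x * w ^ p ^ n ∈ S}.Infinite → ∃ b, b ^ p ^ n = x) (n : ℕ) :
    {y ∈ S ∩ a • (Γ : Set G) | ¬∃ b, b ^ p ^ n = y}.Finite := by
  refine finite_of_finite_pow_cosets hΓ (pow_ne_zero n hp) (fun y hy ↦ hy.1.2)
    fun x hx ↦ Set.not_infinite.1 fun hinf ↦ ?_
  obtain ⟨b, rfl⟩ := hdescent n x hx (hinf.mono fun w hw ↦ ⟨hw.1, hw.2.1.1⟩)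
  obtain ⟨w, -, -, hw⟩ := hinf.nonempty
  exact hw ⟨b * w, mul_pow b w _⟩

theorem pow_mem_leftCoset_iff {q : ℕ} (ha : a ^ (q - 1) ∈ Γ) (hq : q ≠ 0)
    (hΓ : ∀ u, u ^ q ∈ Γ ↔ u ∈ Γ) (y : G) : y ^ q ∈ a • (Γ : Set G) ↔ y ∈ a • (Γ : Set G) := by
  have hy : a⁻¹ * y ^ q = a ^ (q - 1) * (a⁻¹ * y) ^ q := by
    rw [mul_pow, ← mul_assoc, inv_pow, ← pow_sub_one_mul hq a]
    group
  rw [mem_leftCoset_iff, mem_leftCoset_iff, hy, SetLike.mem_coe, SetLike.mem_coe,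
    Subgroup.mul_mem_cancel_left _ ha, hΓ]

theorem finite_or_exists_eq_orbits [Group.FG G] (hp : 1 < p)
    (hS : ∀ y, y ^ p ∈ S ↔ y ∈ S) (hΓ : ∀ u, u ^ p ∈ Γ → u ∈ Γ)
    (hdescent : ∀ n, ∀ x ∈ a • (Γ : Set G),
      {w ∈ (Γ : Set G) | x * w ^ p ^ n ∈ S}.Infinite → ∃ b, b ^ p ^ n = x) :
    (S ∩ a • (Γ : Set G)).Finite ∨ ∃ k, 1 ≤ k ∧ a ^ (p ^ k - 1) ∈ Γ ∧
      ∃ E : Set G, E.Finite ∧ S ∩ a • (Γ : Set G) = {y | ∃ e ∈ E, ∃ n, y = e ^ (p ^ k) ^ n} := by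
  have hfin := finite_setOf_not_pow
    (subgroup_fg_of_le (Group.fg_def.1 inferInstance) (le_top (a := Γ))) (by lia) hdescent
  by_cases hdiv : ∀ n, ∃ b : G, b ^ p ^ n ∈ a • (Γ : Set G)
  · right
    obtain ⟨k, hk, hak⟩ := exists_pow_pow_sub_one_eq_one hp (x := (a : G ⧸ Γ)) fun n ↦ by
      obtain ⟨b, hb⟩ := hdiv n
      exact ⟨b, (QuotientGroup.eq.2 ((mem_leftCoset_iff a).1 hb)).symm⟩
    have hak : a ^ (p ^ k - 1) ∈ Γ := (QuotientGroup.eq_one_iff _).1 hak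
    have hΓk := pow_pow_mem_iff (Y := Γ) (fun u ↦ ⟨hΓ u, (Γ.pow_mem · p)⟩) k
    have hcoset := pow_mem_leftCoset_iff hak (by positivity) hΓk
    exact ⟨k, hk, hak, exists_finite_eq_orbits (Nat.one_lt_pow (by lia) hp)
      (fun y ↦ and_congr (pow_pow_mem_iff hS k y) (hcoset y)) (hfin k)⟩
  · left
    push Not at hdiv
    obtain ⟨n, hn⟩ := hdiv
    refine (hfin n).subset fun y hy ↦ ⟨hy, ?_⟩
    rintro ⟨b, rfl⟩
    exact hn b hy.2

theorem finite_or_exists_eq_orbits_of_fg {P : Subgroup G} (hP : P.FG) (ha : a ∈ P) (hp : 1 < p)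
    (hS : ∀ y, y ^ p ∈ S ↔ y ∈ S) (hΓ : ∀ u, u ^ p ∈ Γ → u ∈ Γ)
    (hdescent : ∀ n, ∀ x ∈ a • (Γ : Set G), x ∈ P →
      {w | w ∈ P ∧ w ∈ Γ ∧ x * w ^ p ^ n ∈ S}.Infinite → ∃ b ∈ P, b ^ p ^ n = x) :
    (S ∩ a • (Γ : Set G) ∩ P).Finite ∨ ∃ k, 1 ≤ k ∧ a ^ (p ^ k - 1) ∈ Γ ∧
      ∃ E : Set G, E.Finite ∧
        S ∩ a • (Γ : Set G) ∩ P = {y | ∃ e ∈ E, ∃ n, y = e ^ (p ^ k) ^ n} := by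
  have : Group.FG P := (Group.fg_iff_subgroup_fg P).2 hP
  let a' : P := ⟨a, ha⟩
  let S' : Set P := Subtype.val ⁻¹' S
  have hcoset : ∀ x : P, x ∈ a' • (Γ.subgroupOf P : Set P) ↔ x.1 ∈ a • (Γ : Set G) :=
    fun x ↦ (mem_leftCoset_iff a').trans (mem_leftCoset_iff a).symm
  have himage : S ∩ a • (Γ : Set G) ∩ P =
      Subtype.val '' (S' ∩ a' • (Γ.subgroupOf P : Set P)) := by
    have hpreimage : S' ∩ a' • (Γ.subgroupOf P : Set P) =
        Subtype.val ⁻¹' (S ∩ a • (Γ : Set G)) := Set.ext fun x ↦ and_congr_right' (hcoset x)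
    rw [hpreimage, Set.inter_comm]
    exact (Subtype.image_preimage_coe _ _).symm
  rw [himage]
  refine (finite_or_exists_eq_orbits (a := a') (S := S') hp (fun y ↦ hS y.1) (fun u hu ↦ hΓ u hu)
    fun n x hx hinf ↦ ?_).imp (·.image _) ?_
  · obtain ⟨b, hb, hbx⟩ := hdescent n x.1 ((hcoset x).1 hx) x.2
      ((hinf.image Subtype.val_injective.injOn).mono (by
        rintro _ ⟨w, hw, rfl⟩
        exact ⟨w.2, hw⟩))
    exact ⟨⟨b, hb⟩, Subtype.ext hbx⟩
  · rintro ⟨k, hk, hak, E, hE, hEq⟩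
    refine ⟨k, hk, hak, Subtype.val '' E, hE.image _, ?_⟩
    rw [hEq]
    ext y
    constructor
    · rintro ⟨_, ⟨e, he, n, rfl⟩, rfl⟩
      exact ⟨e, ⟨e, he, rfl⟩, n, rfl⟩
    · rintro ⟨_, ⟨e, he, rfl⟩, n, rfl⟩
      exact ⟨_, ⟨e, he, n, rfl⟩, rfl⟩

theorem inv_mul_mul_pow_eq {q : ℕ} (hq : 1 ≤ q) {c : G} (hac : a ^ (q - 1) = c ^ (q - 1)) (z : G)
    (n : ℕ) : a⁻¹ * (a * z) ^ q ^ n = c⁻¹ * (c * z) ^ q ^ n := by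
  have hpow : a ^ (q ^ n - 1) = c ^ (q ^ n - 1) := by
    obtain ⟨d, hd⟩ : q - 1 ∣ q ^ n - 1 := by simpa using Nat.sub_dvd_pow_sub_pow q 1 n
    rw [hd, pow_mul, pow_mul, hac]
  have hshift : ∀ b : G, b⁻¹ * (b * z) ^ q ^ n = b ^ (q ^ n - 1) * z ^ q ^ n := fun b ↦ by
    rw [mul_pow, ← mul_assoc, ← mul_pow_sub_one (pow_pos hq n).ne' b, inv_mul_cancel_left]
  rw [hshift, hshift, hpow]

end PowerMapsOfFinitelyGeneratedGroups

section SumZeroLocus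

open scoped Pointwise

variable {K I : Type*} [Field K]

theorem pow_pow_injective_of_charP {p : ℕ} [Fact p.Prime] [CharP K p] (n : ℕ) :
    Function.Injective fun w : I → Kˣ ↦ w ^ p ^ n := fun v w h ↦ by
  funext i
  exact Units.ext (iterateFrobenius_inj K p n (congrArg Units.val (congrFun h i)))

variable [Fintype I]

/-- The hyperplane `∑ yᵢ = 0` of the torus `(Kˣ)^I`. -/
def sumZeroLocus (K I : Type*) [Field K] [Fintype I] : Set (I → Kˣ) :=
  {y | ∑ i, (y i : K) = 0}

theorem pow_mem_sumZeroLocus_iff {p : ℕ} [Fact p.Prime] [CharP K p] (y : I → Kˣ) :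
    y ^ p ∈ sumZeroLocus K I ↔ y ∈ sumZeroLocus K I := by
  simp only [sumZeroLocus, Set.mem_ofPred_eq, Pi.pow_apply, Units.val_pow_eq_pow_val,
    ← sum_pow_char, pow_eq_zero_iff (NeZero.ne p)]

/-- `C` meets the hyperplane `∑ yᵢ = 0` in a set that has only finitely many points on any other
hyperplane `∑ bᵢ yᵢ = 0`. -/
def IsHyperplaneRigid (C : Set (I → Kˣ)) : Prop :=
  ∀ b : I → K, {y ∈ C ∩ sumZeroLocus K I | ∑ i, b i * y i = 0}.Infinite → ∃ c, ∀ i, b i = c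

-- A linear retraction `K → F` turns infinitely many solutions `x * w` with `w` in `F` into
-- solutions of a second linear equation, so rigidity forces the retraction to fix the coordinates
-- of `x`.
theorem IsHyperplaneRigid.mem_subfield {C : Set (I → Kˣ)} (hC : IsHyperplaneRigid C) {i₀ : I}
    (hC₁ : ∀ y ∈ C, y i₀ = 1) {x : I → Kˣ} (hx : x ∈ C) (F : Subfield K)
    (hinf : {w | x * w ∈ C ∩ sumZeroLocus K I ∧ ∀ i, (w i : K) ∈ F}.Infinite) (i : I) :
    (x i : K) ∈ F := by
  obtain ⟨ℓ, hℓ⟩ := (Algebra.linearMap F K).exists_leftInverse_of_injective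
    (LinearMap.ker_eq_bot.2 (algebraMap F K).injective)
  have hℓ₁ : ℓ 1 = 1 := by simpa using LinearMap.congr_fun hℓ 1
  obtain ⟨c, hc⟩ : ∃ c : K, ∀ i, (ℓ (x i) : K) / x i = c := by
    refine hC _ ((hinf.image (mul_right_injective x).injOn).mono ?_)
    rintro _ ⟨w, ⟨hw, hwF⟩, rfl⟩
    have hterm : ∀ i, (ℓ (x i) : K) / x i * ((x * w) i : Kˣ) = ℓ ((x * w) i : Kˣ) := fun i ↦ by
      have hsmul : (ℓ (w i * x i) : K) = w i * ℓ (x i) :=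
        congrArg Subtype.val (ℓ.map_smul ⟨w i, hwF i⟩ (x i))
      rw [Pi.mul_apply, Units.val_mul, mul_comm (x i : K), hsmul]
      field_simp
    have hsum : ∑ i, ((x * w) i : K) = 0 := hw.2
    exact ⟨hw, by simp only [hterm, ← AddSubmonoidClass.coe_finsetSum, ← map_sum, hsum, map_zero,
      ZeroMemClass.coe_zero]⟩
  have hc₁ : c = 1 := by simp [← hc i₀, hC₁ x hx, hℓ₁]
  rw [← (div_eq_one_iff_eq (x i).ne_zero).1 ((hc i).trans hc₁)]
  exact (ℓ (x i)).2

variable {p : ℕ} [Fact p.Prime] [CharP K p] {H : Subgroup (I → Kˣ)} {a : I → Kˣ}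

theorem exists_pow_eq_of_infinite (hrigid : IsHyperplaneRigid (a • (H : Set (I → Kˣ)))) {i₀ : I}
    (hone : ∀ y ∈ a • (H : Set (I → Kˣ)), y i₀ = 1) {L : Subfield K} {B : Subgroup Kˣ}
    (hB : IsPSaturatedIn p L B) {x : I → Kˣ} (hx : x ∈ a • (H : Set (I → Kˣ))) (hxB : ∀ i, x i ∈ B)
    (n : ℕ) (hinf : {w | (∀ i, w i ∈ B) ∧ w ∈ H ∧ x * w ^ p ^ n ∈ sumZeroLocus K I}.Infinite) :
    ∃ b : I → Kˣ, (∀ i, b i ∈ B) ∧ b ^ p ^ n = x := by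
  have hmem := hrigid.mem_subfield hone hx (L.map (iterateFrobenius K p n))
    ((hinf.image (pow_pow_injective_of_charP (p := p) n).injOn).mono (by
      rintro _ ⟨w, ⟨hwB, hwH, hw⟩, rfl⟩
      refine ⟨⟨?_, hw⟩, fun i ↦ ⟨w i, hB.mem_subfield _ (hwB i), rfl⟩⟩
      rw [mem_leftCoset_iff, ← mul_assoc]
      exact mul_mem ((mem_leftCoset_iff a).1 hx) (pow_mem hwH _)))
  have hroot : ∀ i, ∃ u ∈ B, u ^ p ^ n = x i := fun i ↦ by
    obtain ⟨l, hl, hlx⟩ := hmem i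
    have hl0 : l ≠ 0 := by
      rintro rfl
      exact (x i).ne_zero (hlx.symm.trans (map_zero _))
    have hlx : Units.mk0 l hl0 ^ p ^ n = x i := Units.ext hlx
    exact ⟨_, hB.mem_of_pow_pow_mem hl n (hlx ▸ hxB i), hlx⟩
  choose b hbB hb using hroot
  exact ⟨b, hbB, funext hb⟩

theorem exists_finite_or_eq_orbits (hH : ∀ u, u ^ p ∈ H → u ∈ H)
    (hrigid : IsHyperplaneRigid (a • (H : Set (I → Kˣ)))) {i₀ : I}
    (hone : ∀ y ∈ a • (H : Set (I → Kˣ)), y i₀ = 1) {D : Subgroup (I → Kˣ)} (hD : D.FG)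
    (haD : a ∈ D) :
    ∃ Z ⊆ sumZeroLocus K I ∩ a • (H : Set (I → Kˣ)),
      sumZeroLocus K I ∩ a • (H : Set (I → Kˣ)) ∩ D ⊆ Z ∧
      (Z.Finite ∨ ∃ k, 1 ≤ k ∧ a ^ (p ^ k - 1) ∈ H ∧
        ∃ E : Set (I → Kˣ), E.Finite ∧ Z = {y | ∃ e ∈ E, ∃ n, y = e ^ (p ^ k) ^ n}) := by
  obtain ⟨L, B, hBfg, hB, hDB⟩ := exists_isPSaturatedIn_coordinates (p := p) hD
  let P : Subgroup (I → Kˣ) := .pi Set.univ fun _ ↦ B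
  have hP : ∀ {y}, y ∈ P ↔ ∀ i, y i ∈ B := by simp [P, Subgroup.mem_pi]
  refine ⟨sumZeroLocus K I ∩ a • (H : Set (I → Kˣ)) ∩ P, Set.inter_subset_left,
    Set.inter_subset_inter_right _ fun y hy ↦ hP.2 (hDB y hy),
    finite_or_exists_eq_orbits_of_fg (Subgroup.FG.pi fun _ ↦ hBfg) (hP.2 (hDB a haD))
      (Nat.Prime.one_lt Fact.out) pow_mem_sumZeroLocus_iff hH fun n x hx hxP hinf ↦ ?_⟩
  simp only [hP] at hxP hinf ⊢
  exact exists_pow_eq_of_infinite hrigid hone hB hx hxP n hinf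

variable {T : Type*} [CommGroup T] {M : T →* (I → Kˣ)} {i₀ : I} {Γ : Subgroup T}

theorem exists_orbits_of_range (hT : ∀ n ≠ 0, Function.Surjective fun t : T ↦ t ^ n)
    (hrigid : IsHyperplaneRigid (a • (M.range : Set (I → Kˣ))))
    (hone : ∀ y ∈ a • (M.range : Set (I → Kˣ)), y i₀ = 1) (hΓ : Γ.FG) :
    ∃ k, 1 ≤ k ∧ ∃ E : Set (T × T), E.Finite ∧ ∀ g ∈ Γ, a * M g ∈ sumZeroLocus K I ↔
      ∃ x ∈ E, ∃ n, M g = M (x.1 * x.2 ^ (p ^ k) ^ n) := by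
  have hp : 1 < p := Nat.Prime.one_lt Fact.out
  have hsat : ∀ u, u ^ p ∈ M.range → u ∈ M.range := by
    rintro u ⟨t, ht⟩
    obtain ⟨s, rfl⟩ := hT p (by lia) t
    exact ⟨s, pow_pow_injective_of_charP (p := p) 1 (by simpa using ht)⟩
  obtain ⟨Z, hZS, hSZ, hZ⟩ := exists_finite_or_eq_orbits hsat hrigid hone
    (Subgroup.FG.sup ⟨{a}, by simp [Subgroup.zpowers_eq_closure]⟩ (subgroup_fg_map hΓ M))
    (Subgroup.mem_sup_left (Subgroup.mem_zpowers a))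
  have hmemZ : ∀ g ∈ Γ, a * M g ∈ sumZeroLocus K I ↔ a * M g ∈ Z := fun g hg ↦
    ⟨fun h ↦ hSZ ⟨⟨h, ⟨M g, ⟨g, rfl⟩, rfl⟩⟩, mul_mem
      (Subgroup.mem_sup_left (Subgroup.mem_zpowers a)) (Subgroup.mem_sup_right ⟨g, hg, rfl⟩)⟩,
      fun h ↦ (hZS h).1⟩
  have hlift : ∀ z ∈ Z, ∃ t, a * M t = z := fun z hz ↦ by
    obtain ⟨_, ⟨t, rfl⟩, ht⟩ := (hZS hz).2
    exact ⟨t, ht⟩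
  choose! t ht using hlift
  rcases hZ with hZ | ⟨k, hk, ⟨s, hs⟩, E, hE, rfl⟩
  · refine ⟨1, le_rfl, (fun z ↦ (t z, 1)) '' Z, hZ.image _, fun g hg ↦ (hmemZ g hg).trans ?_⟩
    rw [Set.exists_mem_image]
    constructor
    · exact fun hgZ ↦ ⟨_, hgZ, 0, by simpa using (mul_left_cancel (ht _ hgZ)).symm⟩
    · rintro ⟨z, hz, n, hgz⟩
      rwa [hgz, one_pow, mul_one, ht z hz]
  · obtain ⟨c, rfl⟩ := hT (p ^ k - 1) (Nat.sub_pos_of_lt (Nat.one_lt_pow (by lia) hp)).ne' s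
    have horbit : ∀ e ∈ E, ∀ n, a * M (c⁻¹ * (c * t e) ^ (p ^ k) ^ n) = e ^ (p ^ k) ^ n :=
      fun e he n ↦ by
        have hat : a * M (t e) = e := ht e ⟨e, he, 0, by simp⟩
        have hac : a ^ (p ^ k - 1) = M c ^ (p ^ k - 1) := by simpa using hs.symm
        rw [map_mul, map_inv, map_pow, map_mul,
          ← inv_mul_mul_pow_eq (Nat.one_le_pow _ _ hp.le) hac, mul_inv_cancel_left, hat]
    refine ⟨k, hk, (fun e ↦ (c⁻¹, c * t e)) '' E, hE.image _, fun g hg ↦ (hmemZ g hg).trans ?_⟩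
    rw [Set.exists_mem_image]
    refine exists_congr fun e ↦ and_congr_right fun he ↦ exists_congr fun n ↦ ?_
    rw [← horbit e he n, mul_right_inj]

theorem exists_orbits_of_finite_ker (hT : ∀ n ≠ 0, Function.Surjective fun t : T ↦ t ^ n)
    (hrigid : IsHyperplaneRigid (a • (M.range : Set (I → Kˣ))))
    (hone : ∀ y ∈ a • (M.range : Set (I → Kˣ)), y i₀ = 1) (hΓ : Γ.FG)
    (hker : (M.ker : Set T).Finite) :
    ∃ k, 1 ≤ k ∧ ∃ E : Set (T × T), E.Finite ∧ ∀ g ∈ Γ, a * M g ∈ sumZeroLocus K I ↔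
      ∃ x ∈ E, ∃ n, g = x.1 * x.2 ^ (p ^ k) ^ n := by
  obtain ⟨k, hk, E, hE, hgE⟩ := exists_orbits_of_range (p := p) hT hrigid hone hΓ
  refine ⟨k, hk, Set.image2 (fun κ x ↦ (κ * x.1, x.2)) M.ker E, hker.image2 _ hE,
    fun g hg ↦ (hgE g hg).trans ⟨?_, ?_⟩⟩
  · rintro ⟨x, hx, n, hn⟩
    refine ⟨_, ⟨g / (x.1 * x.2 ^ (p ^ k) ^ n), ?_, x, hx, rfl⟩, n, ?_⟩
    · exact M.mem_ker.2 (by rw [map_div, hn, div_self'])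
    · rw [mul_assoc, div_mul_cancel]
  · rintro ⟨_, ⟨κ, hκ, x, hx, rfl⟩, n, rfl⟩
    exact ⟨x, hx, n, by rw [mul_assoc, map_mul, M.mem_ker.1 hκ, one_mul]⟩

end SumZeroLocus

section GrouplessFSets

theorem forall_iterate_ne_or_exists_iterate_eq_iff {α : Type*} (f : α → α) (x y : α) :
    (∀ n, f^[n] x ≠ y) ∨ ∃ n₀ d, ∀ n, f^[n] x = y ↔ ∃ j, n = n₀ + d * j := by
  classical
  by_cases h : ∃ n, f^[n] x = y
  · refine .inr ⟨Nat.find h, Function.minimalPeriod f y, fun n ↦ ⟨fun hn ↦ ?_, ?_⟩⟩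
    · obtain ⟨e, he⟩ := Nat.exists_eq_add_of_le' (Nat.find_min' h hn)
      rw [he, Function.iterate_add_apply, Nat.find_spec h] at hn
      obtain ⟨j, rfl⟩ := Function.isPeriodicPt_iff_minimalPeriod_dvd.1 hn
      exact ⟨j, he.trans (add_comm _ _)⟩
    · rintro ⟨j, rfl⟩
      rw [add_comm, Function.iterate_add_apply, Nat.find_spec h]
      exact (Function.isPeriodicPt_minimalPeriod f y).mul_const j |>.eq
  · exact .inl (not_exists.1 h)

theorem forall_mul_pow_notMem_or_exists_mem_iff {G : Type*} [CommGroup G] (Γ : Subgroup G)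
    (a b : G) (q : ℕ) : (∀ n, a * b ^ q ^ n ∉ Γ) ∨
      ∃ n₀ d, ∀ n, a * b ^ q ^ n ∈ Γ ↔ ∃ j, n = n₀ + d * j := by
  have hmem : ∀ n, a * b ^ q ^ n ∈ Γ ↔ (· ^ q)^[n] (b : G ⧸ Γ) = ((a⁻¹ : G) : G ⧸ Γ) := fun n ↦ by
    simp only [pow_iterate]
    rw [← QuotientGroup.mk_pow, eq_comm, QuotientGroup.eq, inv_inv]
  simp only [hmem]
  exact forall_iterate_ne_or_exists_iterate_eq_iff _ _ _

variable {K : Type*} [Field K] {p : ℕ} {Γ : Subgroup (Kˣ × Kˣ)}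

theorem isGrouplessFSet₂_of_orbit_nonempty {α₀ α : Kˣ × Kˣ} {k : ℕ} (hk : 1 ≤ k)
    (hne : {g | g ∈ Γ ∧ ∃ n, g = α₀ * α ^ (p ^ k) ^ n}.Nonempty) :
    IsGrouplessFSet₂ p Γ {g | g ∈ Γ ∧ ∃ n, g = α₀ * α ^ (p ^ k) ^ n} := by
  refine ⟨fun g hg ↦ hg.1, k, hk, ?_⟩
  rcases forall_mul_pow_notMem_or_exists_mem_iff Γ α₀ α (p ^ k) with hempty | ⟨n₀, d, hn₀⟩
  · obtain ⟨_, hg, n, rfl⟩ := hne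
    exact absurd hg (hempty n)
  have hset : {g | g ∈ Γ ∧ ∃ n, g = α₀ * α ^ (p ^ k) ^ n} =
      {g | ∃ j, g = α₀ * (α ^ (p ^ k) ^ n₀) ^ (p ^ k) ^ (d * j)} := by
    simp only [← pow_mul α, ← pow_add]
    ext g
    constructor
    · rintro ⟨hg, n, rfl⟩
      obtain ⟨j, rfl⟩ := (hn₀ n).1 hg
      exact ⟨j, rfl⟩
    · rintro ⟨j, rfl⟩
      exact ⟨(hn₀ _).2 ⟨j, rfl⟩, _, rfl⟩
  rw [hset]
  rcases Nat.eq_zero_or_pos d with rfl | hd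
  · exact ⟨0, 1, le_rfl, α₀ * α ^ (p ^ k) ^ n₀, Fin.elim0, by simp⟩
  · refine ⟨1, d, hd, α₀, fun _ ↦ α ^ (p ^ k) ^ n₀, Set.ext fun g ↦ ?_⟩
    simp only [Set.mem_ofPred_eq, Fin.prod_univ_one]
    exact ⟨fun ⟨j, hj⟩ ↦ ⟨fun _ ↦ j, hj⟩, fun ⟨n, hn⟩ ↦ ⟨n 0, hn⟩⟩

theorem exists_iUnion_isGrouplessFSet₂ {X : Set (Kˣ × Kˣ)} {k : ℕ} (hk : 1 ≤ k)
    {E : Set ((Kˣ × Kˣ) × (Kˣ × Kˣ))} (hE : E.Finite)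
    (hX : ∀ g ∈ Γ, g ∈ X ↔ ∃ x ∈ E, ∃ n, g = x.1 * x.2 ^ (p ^ k) ^ n) :
    ∃ (n : ℕ) (S : Fin n → Set (Kˣ × Kˣ)),
      (∀ i, IsGrouplessFSet₂ p Γ (S i)) ∧ X ∩ ↑Γ = ⋃ i, S i := by
  let orbit : (Kˣ × Kˣ) × (Kˣ × Kˣ) → Set (Kˣ × Kˣ) :=
    fun x ↦ {g | g ∈ Γ ∧ ∃ n, g = x.1 * x.2 ^ (p ^ k) ^ n}
  obtain ⟨n, S, -, hS⟩ := ((hE.image orbit).inter_of_left {s | s.Nonempty}).fin_param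
  refine ⟨n, S, fun i ↦ ?_, ?_⟩
  · obtain ⟨⟨x, -, hx⟩, hne⟩ := hS.le ⟨i, rfl⟩
    rw [← hx] at hne ⊢
    exact isGrouplessFSet₂_of_orbit_nonempty hk hne
  · rw [← Set.sUnion_range, hS]
    ext g
    constructor
    · rintro ⟨hgX, hg⟩
      obtain ⟨x, hx, hgx⟩ := (hX g hg).1 hgX
      exact ⟨orbit x, ⟨⟨x, hx, rfl⟩, g, hg, hgx⟩, hg, hgx⟩
    · rintro ⟨_, ⟨⟨x, hx, rfl⟩, -⟩, hg, hgx⟩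
      exact ⟨(hX g hg).2 ⟨x, hx, hgx⟩, hg⟩

end GrouplessFSets

section PlaneCurves

open MvPolynomial

theorem isMaximal_of_prime_mem_of_not_dvd {R : Type*} [CommRing R] [IsDomain R]
    (hdim : ringKrullDim R = 2) {f g : R} (hf : Prime f) (hfg : ¬f ∣ g) {P : Ideal R} [P.IsPrime]
    (hfP : f ∈ P) (hgP : g ∈ P) : P.IsMaximal := by
  have : FiniteRingKrullDim R := finiteRingKrullDim_iff_ne_bot_and_top.2 ⟨by simp [hdim],
    hdim.trans_ne (WithBot.coe_injective.ne (ENat.natCast_ne_top 2))⟩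
  have : (Ideal.span {f}).IsPrime := (Ideal.span_singleton_prime hf.ne_zero).2 hf
  have hlt : Ideal.span {f} < P :=
    ((Ideal.span_singleton_le_iff_mem _).2 hfP).lt_of_ne fun h ↦
      hfg (Ideal.mem_span_singleton.1 (h ▸ hgP))
  have hheight : 2 ≤ P.height := by
    have : 1 ≤ (Ideal.span {f}).height := by
      rw [Order.one_le_iff_ne_zero, Ne, Ideal.height_eq_zero_iff_eq_bot,
        Ideal.span_singleton_eq_bot]
      exact hf.ne_zero
    calc (2 : ℕ∞) = 1 + 1 := one_add_one_eq_two.symm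
      _ ≤ (Ideal.span {f}).height + 1 := by gcongr
      _ ≤ P.height := Ideal.height_add_one_le_of_lt_of_isPrime hlt
  refine Ideal.isMaximal_of_height_eq_ringKrullDim (le_antisymm ?_ ?_)
  · exact Ideal.height_le_ringKrullDim_of_isPrime
  · rw [hdim]
    exact WithBot.coe_le_coe.2 hheight

variable {K : Type*} [Field K]

theorem ker_eval_injective {σ : Type*} :
    Function.Injective fun v : σ → K ↦ RingHom.ker (eval v) := fun v w h ↦ by
  funext i
  have hmem : X i - C (v i) ∈ RingHom.ker (eval v) := by simp [RingHom.mem_ker]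
  rw [show RingHom.ker (eval v) = RingHom.ker (eval w) from h, RingHom.mem_ker] at hmem
  simpa [sub_eq_zero, eq_comm] using hmem

theorem finite_setOf_common_zeros {f g : MvPolynomial (Fin 2) K} (hf : Irreducible f)
    (hfg : ¬f ∣ g) : {v | eval v f = 0 ∧ eval v g = 0}.Finite := by
  have hdim : ringKrullDim (MvPolynomial (Fin 2) K) = 2 := by
    simp [MvPolynomial.ringKrullDim_of_isNoetherianRing]
  refine ((Ideal.finite_minimalPrimes_of_isNoetherianRing _ (Ideal.span {f, g})).preimage
    ker_eval_injective.injOn).subset fun v ⟨hfv, hgv⟩ ↦ ?_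
  have : (RingHom.ker (eval v)).IsPrime := RingHom.ker_isPrime _
  obtain ⟨P, hP, hPv⟩ := Ideal.exists_minimalPrimes_le (J := RingHom.ker (eval v))
    (I := Ideal.span {f, g}) (Ideal.span_le.2 (Set.pair_subset hfv hgv))
  obtain ⟨hfP, hgP⟩ := Set.pair_subset_iff.1 (Ideal.span_le.1 hP.le)
  have := hP.isPrime
  have := isMaximal_of_prime_mem_of_not_dvd hdim hf.prime hfg hfP hgP
  rwa [Set.mem_preimage, ← this.eq_of_le (Ideal.IsPrime.ne_top ‹_›) hPv]

theorem eq_C_mul_of_infinite_common_zeros {f g : MvPolynomial (Fin 2) K} (hf : Irreducible f)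
    (hsupp : g.support ⊆ f.support) (hinf : {v | eval v f = 0 ∧ eval v g = 0}.Infinite) :
    ∃ c, g = C c * f := by
  obtain ⟨q, rfl⟩ : f ∣ g := not_not.1 fun hfg ↦ hinf (finite_setOf_common_zeros hf hfg)
  rcases eq_or_ne q 0 with rfl | hq
  · exact ⟨0, by simp⟩
  have hdeg : (f * q).totalDegree ≤ f.totalDegree := Finset.sup_mono hsupp
  rw [totalDegree_mul_of_isDomain hf.ne_zero hq, add_le_iff_nonpos_right, nonpos_iff_eq_zero,
    totalDegree_eq_zero_iff_eq_C] at hdeg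
  exact ⟨_, by rw [← hdeg, mul_comm]⟩

variable {σ : Type*}

/-- The ratios of the nonzero coefficients of `f` to the one at `m₀`, as a point of a torus. -/
def coeffRatio (f : MvPolynomial σ K) (m₀ : f.support) (m : f.support) : Kˣ :=
  Units.mk0 (f.coeff m) (mem_support_iff.1 m.2) / Units.mk0 (f.coeff m₀) (mem_support_iff.1 m₀.2)

/-- The polynomial obtained from `f` by multiplying its coefficient at each `m` by `b m`. -/
noncomputable def reweight (f : MvPolynomial σ K) (b : f.support → K) : MvPolynomial σ K :=
  ∑ m : f.support, monomial m.1 (b m * f.coeff m)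

theorem reweight_one (f : MvPolynomial σ K) : reweight f 1 = f := by
  simp only [reweight, Pi.one_apply, one_mul]
  exact (f.support.sum_coe_sort fun m ↦ monomial m (f.coeff m)).trans f.support_sum_monomial_coeff

theorem coeff_reweight (f : MvPolynomial σ K) (b : f.support → K) (m : f.support) :
    (reweight f b).coeff m = b m * f.coeff m := by
  classical
  rw [reweight, coeff_sum, Finset.sum_eq_single m]
  · rw [coeff_monomial, if_pos rfl]
  · exact fun m' _ hm' ↦ (coeff_monomial _ _ _).trans (if_neg (mt Subtype.ext hm'))
  · simp

theorem support_reweight_subset (f : MvPolynomial σ K) (b : f.support → K) :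
    (reweight f b).support ⊆ f.support := by
  classical
  refine support_sum.trans (Finset.biUnion_subset.2 fun m _ ↦ support_monomial_subset.trans ?_)
  exact Finset.singleton_subset_iff.2 m.2

variable [Fintype σ]

/-- The torus homomorphism with coordinates `u ^ m / u ^ m₀`, where `m` runs through `s`. -/
def monomialRatio (K : Type*) [Field K] (s : Finset (σ →₀ ℕ)) (m₀ : σ →₀ ℕ) :
    (σ → Kˣ) →* (s → Kˣ) where
  toFun u m := (∏ i, u i ^ m.1 i) / ∏ i, u i ^ m₀ i
  map_one' := by ext; simp
  map_mul' u v := by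
    ext1 m
    simp only [Pi.mul_apply, mul_pow, Finset.prod_mul_distrib, mul_div_mul_comm]

theorem eval_reweight_eq_zero_iff (f : MvPolynomial σ K) (m₀ : f.support) (b : f.support → K)
    (u : σ → Kˣ) : eval (fun i ↦ (u i : K)) (reweight f b) = 0 ↔
      ∑ m, b m * ((coeffRatio f m₀ * monomialRatio K f.support m₀ u) m : Kˣ) = 0 := by
  have hfactor : eval (fun i ↦ (u i : K)) (reweight f b) = f.coeff m₀ * (∏ i, u i ^ m₀.1 i : Kˣ) *
      ∑ m, b m * ((coeffRatio f m₀ * monomialRatio K f.support m₀ u) m : Kˣ) := by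
    rw [reweight, map_sum, Finset.mul_sum]
    refine Finset.sum_congr rfl fun m _ ↦ ?_
    have hm₀ : f.coeff m₀ ≠ 0 := mem_support_iff.1 m₀.2
    rw [eval_monomial, Finsupp.prod_fintype _ _ fun i ↦ pow_zero _]
    have hu : ∏ i, (u i : K) ^ m₀.1 i ≠ 0 :=
      Finset.prod_ne_zero_iff.2 fun i _ ↦ pow_ne_zero _ (u i).ne_zero
    simp only [coeffRatio, monomialRatio, MonoidHom.coe_mk, OneHom.coe_mk, Pi.mul_apply,
      Units.val_mul, Units.val_div_eq_div_val, Units.val_mk0, Units.coe_prod,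
      Units.val_pow_eq_pow_val]
    field_simp
  have hne : f.coeff m₀ * (∏ i, u i ^ m₀.1 i : Kˣ) ≠ 0 :=
    mul_ne_zero (mem_support_iff.1 m₀.2) (Units.ne_zero _)
  rw [hfactor, mul_eq_zero, or_iff_right hne]

theorem eval_eq_zero_iff_mem_sumZeroLocus (f : MvPolynomial σ K) (m₀ : f.support) (u : σ → Kˣ) :
    eval (fun i ↦ (u i : K)) f = 0 ↔
      coeffRatio f m₀ * monomialRatio K f.support m₀ u ∈ sumZeroLocus K f.support := by
  conv_lhs => rw [← reweight_one f]
  simpa [sumZeroLocus] using eval_reweight_eq_zero_iff f m₀ 1 u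

open scoped Pointwise

theorem isHyperplaneRigid_of_irreducible {f : MvPolynomial (Fin 2) K} (hf : Irreducible f)
    (m₀ : f.support) : IsHyperplaneRigid
      (coeffRatio f m₀ • ((monomialRatio K f.support m₀).range : Set (f.support → Kˣ))) := by
  intro b hinf
  have hzeros : {v | eval v f = 0 ∧ eval v (reweight f b) = 0}.Infinite := by
    have hlift : ∀ y ∈ coeffRatio f m₀ •
        ((monomialRatio K f.support m₀).range : Set (f.support → Kˣ)),
        ∃ u, coeffRatio f m₀ * monomialRatio K f.support m₀ u = y := by
      rintro _ ⟨_, ⟨u, rfl⟩, rfl⟩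
      exact ⟨u, rfl⟩
    refine fun hfin ↦ hinf ((hfin.preimage ((Units.val_injective.comp_left).injOn) |>.image
      fun u ↦ coeffRatio f m₀ * monomialRatio K f.support m₀ u).subset ?_)
    rintro y ⟨⟨hy, hysum⟩, hyb⟩
    obtain ⟨u, rfl⟩ := hlift y hy
    exact ⟨u, ⟨(eval_eq_zero_iff_mem_sumZeroLocus f m₀ u).2 hysum,
      (eval_reweight_eq_zero_iff f m₀ b u).2 hyb⟩, rfl⟩
  obtain ⟨c, hc⟩ := eq_C_mul_of_infinite_common_zeros hf (support_reweight_subset f b) hzeros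
  refine ⟨c, fun m ↦ mul_right_cancel₀ (mem_support_iff.1 m.2) ?_⟩
  rw [← coeff_reweight, hc, coeff_C_mul]

theorem apply_eq_one_of_mem_coeffRatio_smul (f : MvPolynomial σ K) (m₀ : f.support) :
    ∀ y ∈ coeffRatio f m₀ • ((monomialRatio K f.support m₀).range : Set (f.support → Kˣ)),
      y m₀ = 1 := by
  rintro _ ⟨_, ⟨u, rfl⟩, rfl⟩
  simp [coeffRatio, monomialRatio]

end PlaneCurves

section Torus

theorem finite_ker_of_finite_stabilizer {G A : Type*} [Group G] [Group A] {M : G →* A} {S : Set A}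
    (hS : {g | (fun x ↦ g * x) '' (M ⁻¹' S) = M ⁻¹' S}.Finite) : (M.ker : Set G).Finite :=
  hS.subset fun g hg ↦ by
    rw [Set.mem_ofPred_eq, Set.image_mul_left]
    ext x
    simp [M.mem_ker.1 hg]

theorem pow_surjective_units_prod {K : Type*} [Field K] [IsAlgClosed K] {n : ℕ} (hn : n ≠ 0) :
    Function.Surjective fun u : Kˣ × Kˣ ↦ u ^ n := by
  have hunits : Function.Surjective fun u : Kˣ ↦ u ^ n := fun u ↦ by
    obtain ⟨z, hz⟩ := IsAlgClosed.exists_pow_nat_eq (u : K) (Nat.pos_of_ne_zero hn)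
    have hz₀ : z ≠ 0 := fun h ↦ u.ne_zero (by rw [← hz, h, zero_pow hn])
    exact ⟨Units.mk0 z hz₀, Units.ext hz⟩
  exact hunits.prodMap hunits

/-- The identification of `G × G`, which carries the final theorem, with `Fin 2 → G`, which indexes
the variables of a plane curve. -/
def prodMulEquivFinTwo (G : Type*) [Mul G] : G × G ≃* (Fin 2 → G) where
  __ := (finTwoArrowEquiv G).symm
  map_mul' _ _ := funext (Fin.forall_fin_two.2 ⟨rfl, rfl⟩)

theorem eval_pair_eq_zero_iff {K : Type*} [Field K] (f : MvPolynomial (Fin 2) K) (m₀ : f.support)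
    (g : Kˣ × Kˣ) : MvPolynomial.eval ![(g.1 : K), (g.2 : K)] f = 0 ↔
      coeffRatio f m₀ * monomialRatio K f.support m₀ (prodMulEquivFinTwo Kˣ g) ∈
        sumZeroLocus K f.support := by
  rw [← eval_eq_zero_iff_mem_sumZeroLocus]
  have hpair : ![(g.1 : K), (g.2 : K)] = fun i ↦ (prodMulEquivFinTwo Kˣ g i : K) :=
    funext (Fin.forall_fin_two.2 ⟨rfl, rfl⟩)
  rw [hpair]

end Torus

/-- Proposition on curves, part (ii) (torus case): let `X ⊆ (Kˣ)²` be the zero set of an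
irreducible polynomial `f ∈ K[x,y]`, an infinite (hence irreducible) curve in the torus,
and `Γ` a finitely generated subgroup of `(Kˣ)²`. If the stabilizer of `X` in `(Kˣ)²`
is finite, then `X ∩ Γ` is a finite union of groupless `F`-sets in `Γ`. -/
theorem curve_intersection_groupless_F_sets_of_finite_stabilizer
    (K : Type*) [Field K] [IsAlgClosed K] (p : ℕ) (hp : p.Prime) [CharP K p]
    (f : MvPolynomial (Fin 2) K) (hf : Irreducible f)
    (X : Set (Kˣ × Kˣ))
    (hX : X = {g : Kˣ × Kˣ | MvPolynomial.eval ![(g.1 : K), (g.2 : K)] f = 0})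
    (hXinf : X.Infinite)
    (Γ : Subgroup (Kˣ × Kˣ)) (hΓ : Γ.FG)
    (hstab : {g : Kˣ × Kˣ | (fun x => g * x) '' X = X}.Finite) :
    ∃ (n : ℕ) (Ss : Fin n → Set (Kˣ × Kˣ)),
      (∀ i, IsGrouplessFSet₂ p Γ (Ss i)) ∧ X ∩ ↑Γ = ⋃ i, Ss i := by
  have : Fact p.Prime := ⟨hp⟩
  obtain ⟨m, hm⟩ := MvPolynomial.support_nonempty.2 hf.ne_zero
  let m₀ : f.support := ⟨m, hm⟩
  let M := (monomialRatio K f.support m₀).comp (prodMulEquivFinTwo Kˣ).toMonoidHom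
  have hrange : M.range = (monomialRatio K f.support m₀).range := by
    rw [MonoidHom.range_comp, MonoidHom.range_eq_top.2 (prodMulEquivFinTwo Kˣ).surjective,
      MonoidHom.range_eq_map]
  have hXM : X = M ⁻¹' {y | coeffRatio f m₀ * y ∈ sumZeroLocus K f.support} :=
    hX.trans (Set.ext (eval_pair_eq_zero_iff f m₀))
  have hker : (M.ker : Set (Kˣ × Kˣ)).Finite := finite_ker_of_finite_stabilizer (hXM ▸ hstab)
  obtain ⟨k, hk, E, hE, hEΓ⟩ := exists_orbits_of_finite_ker (p := p) (i₀ := m₀)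
    (fun n hn ↦ pow_surjective_units_prod hn)
    (hrange ▸ isHyperplaneRigid_of_irreducible hf m₀)
    (hrange ▸ apply_eq_one_of_mem_coeffRatio_smul f m₀) hΓ hker
  exact exists_iUnion_isGrouplessFSet₂ hk hE (hXM ▸ hEΓ)
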